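/- Assume G has at least one edge. For k ≥ 1 let N_k denote the number of face-chains ∅ ⊊ S_1 ⊊ ⋯ ⊊ S_k ⊊ [d] of G of length k. Then Σ_{k ≥ 1} (−1)^{k−1} N_k = 1 + (−1)^{d−1}·(a(G) − 1), where a(G) is the number of acyclic orientations of G; equivalently, the reduced Euler characteristic of the coloring complex Δ_G equals (−1)^{d−1}·(a(G) − 1). In particular, when d is odd, the Euler characteristic Σ_{k ≥ 1} (−1)^{k−1} N_k of Δ_G equals the number of acyclic orientations of G. -/

import Mathlib

/-!
Call a strict chain `∅ = S 0 ⊂ ⋯ ⊂ S k = A` stable if no difference set contains an edge.  The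
chains of length `k` that are not face-chains are the stable chains of `G` with `k + 1` steps, and
all chains together are the stable chains of the empty graph `⊥`.  So everything follows from

  `∑ k, (-1) ^ k * #(stable chains of H with k steps from ∅ to A) = (-1) ^ |A| * a(H[A])`

(`sum_stableChain`), which is Stanley's theorem on the chromatic polynomial at `-1`, applied to
`H = G` and `H = ⊥`; for the latter the right-hand side is `(-1) ^ |A|`.  The
summand `1` in the Euler characteristic is the chain `∅ ⊂ univ`, counted by `N 0`.

Both sides satisfy the same recursion.  Removing the last step of a chain gives
`c (k + 1) A = ∑ B, c k B` over `B ⊂ A` with `A \ B` stable (`card_stableChain_succ`).  On the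
other side, an acyclic orientation of `H[A]` all of whose vertices in `T` are sources is the same
as a stable `T` and an acyclic orientation of `H[A \ T]` (`card_orientations_sources`).  Every
acyclic orientation of a nonempty graph has a source, so the alternating sum over the subsets of
the set of its sources vanishes; summing over all orientations gives
`∑ T, (-1) ^ |T| * a(H[A \ T]) = 0` over stable `T ⊆ A` (`sum_orientations_sdiff`).
-/

/-- `a(G)`: the number of acyclic orientations of `G`, i.e. of relations `o` on the
vertices such that `o u v` implies `u` and `v` adjacent, for each pair of adjacent
vertices exactly one of `o u v`, `o v u` holds, and the transitive closure of `o` is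
irreflexive. -/
noncomputable def acyclicOrientations {d : ℕ} (G : SimpleGraph (Fin d)) : ℕ :=
  Nat.card {o : Fin d → Fin d → Prop //
    (∀ u v, o u v → G.Adj u v) ∧ (∀ u v, G.Adj u v → (o u v ↔ ¬ o v u)) ∧
    ∀ u, ¬ Relation.TransGen o u u}

section ColoringComplex

set_option linter.unusedSectionVars false

variable {V : Type*} [Fintype V] [DecidableEq V]

/-- `T` contains no two adjacent vertices. -/
def StableIn (G : SimpleGraph V) (T : Finset V) : Prop :=
  ∀ u ∈ T, ∀ v ∈ T, ¬ G.Adj u v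

/-- `o` is an acyclic orientation of the subgraph of `G` induced on `A`, encoded as a relation on
all of `V` that holds only between vertices of `A`. -/
def IsAcyclicOrientationOn (G : SimpleGraph V) (A : Finset V) (o : V → V → Prop) : Prop :=
  (∀ u v, o u v → G.Adj u v ∧ u ∈ A ∧ v ∈ A) ∧
  (∀ u ∈ A, ∀ v ∈ A, G.Adj u v → (o u v ↔ ¬ o v u)) ∧
  ∀ u, ¬ Relation.TransGen o u u

open Classical in
/-- The finite set of acyclic orientations of the subgraph of `G` induced on `A`. -/
noncomputable def orientationsOn (G : SimpleGraph V) (A : Finset V) : Finset (V → V → Prop) :=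
  Finset.univ.filter (IsAcyclicOrientationOn G A)

open Classical in
/-- The vertices of `A` without incoming edge. -/
noncomputable def sourcesIn (A : Finset V) (o : V → V → Prop) : Finset V :=
  A.filter (fun w => ∀ u, ¬ o u w)

/-- Strict chains `∅ = S 0 ⊂ ⋯ ⊂ S k = A` all of whose difference sets are stable, encoded as
sequences that are constantly `A` from index `k` on. -/
def stableChain (G : SimpleGraph V) (k : ℕ) (A : Finset V) : Set (ℕ → Finset V) :=
  {S | S 0 = ∅ ∧ (∀ i, k ≤ i → S i = A) ∧ (∀ i, i < k → S i ⊂ S (i + 1)) ∧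
    ∀ i, i < k → StableIn G (S (i + 1) \ S i)}

lemma mem_orientationsOn {G : SimpleGraph V} {A : Finset V} {o : V → V → Prop} :
    o ∈ orientationsOn G A ↔ IsAcyclicOrientationOn G A o := by
  simp [orientationsOn]

/-! ### Acyclic orientations -/

lemma sourcesIn_nonempty {G : SimpleGraph V} {A : Finset V} {o : V → V → Prop}
    (hA : A.Nonempty) (ho : IsAcyclicOrientationOn G A o) : (sourcesIn A o).Nonempty := by
  classical
  have : Std.Irrefl (Relation.TransGen o) := ⟨ho.2.2⟩
  have wf : WellFounded (Relation.TransGen o) := Finite.wellFounded_of_trans_of_irrefl _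
  obtain ⟨m, hm, hmin⟩ := wf.has_min (A : Set V) hA
  refine ⟨m, ?_⟩
  simp only [sourcesIn, Finset.mem_filter]
  exact ⟨hm, fun u hu => hmin u (ho.1 u m hu).2.1 (.single hu)⟩

/-- An edge between two vertices of `T` would have to enter one of them, so a set of sources is
stable. -/
lemma stableIn_of_subset_sourcesIn {G : SimpleGraph V} {A T : Finset V} {o : V → V → Prop}
    (ho : IsAcyclicOrientationOn G A o) (hT : T ⊆ sourcesIn A o) : StableIn G T := by
  intro u hu v hv huv
  have h1 := hT hu
  have h2 := hT hv
  simp only [sourcesIn, Finset.mem_filter] at h1 h2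
  exact h2.2 u ((ho.2.1 u h1.1 v h2.1 huv).2 (h1.2 v))

open Classical in
/-- If `A \ B` is stable, restriction to `B` is a bijection from the acyclic orientations of
`G[A]` in which all vertices of `A \ B` are sources to those of `G[B]`; the inverse directs every
edge between `A \ B` and `B` towards `B`. -/
lemma card_orientations_sources (G : SimpleGraph V) {A B : Finset V} (hBA : B ⊆ A)
    (hst : StableIn G (A \ B)) :
    ((orientationsOn G A).filter (fun o => A \ B ⊆ sourcesIn A o)).card =
      (orientationsOn G B).card := by
  refine Finset.card_nbij' (fun o u v => o u v ∧ u ∈ B)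
    (fun o u v => o u v ∨ (u ∈ A \ B ∧ v ∈ B ∧ G.Adj u v)) ?_ ?_ ?_ ?_
  · intro o ho
    simp only [Finset.coe_filter, Set.mem_ofPred_eq, mem_orientationsOn] at ho
    obtain ⟨⟨h1, h2, h3⟩, hs⟩ := ho
    have hs' : ∀ w ∈ A, w ∉ B → ∀ u, ¬ o u w := fun w hw hwB => by
      have := hs (Finset.mem_sdiff.2 ⟨hw, hwB⟩)
      simp only [sourcesIn, Finset.mem_filter] at this
      exact this.2
    simp only [Finset.mem_coe, mem_orientationsOn]
    refine ⟨fun u v h => ⟨(h1 u v h.1).1, h.2, ?_⟩, ?_, ?_⟩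
    · by_contra hv
      exact hs' v (h1 u v h.1).2.2 hv u h.1
    · intro u hu v hv huv
      have := h2 u (hBA hu) v (hBA hv) huv
      tauto
    · intro u hu
      exact h3 u (Relation.TransGen.mono (fun _ _ h => h.1) _ _ hu)
  · intro o ho
    simp only [Finset.mem_coe, mem_orientationsOn] at ho
    obtain ⟨h1, h2, h3⟩ := ho
    simp only [Finset.coe_filter, Set.mem_ofPred_eq, mem_orientationsOn]
    refine ⟨⟨?_, ?_, ?_⟩, ?_⟩
    · rintro u v (h | ⟨hu, hv, h⟩)
      · exact ⟨(h1 u v h).1, hBA (h1 u v h).2.1, hBA (h1 u v h).2.2⟩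
      · exact ⟨h, (Finset.mem_sdiff.1 hu).1, hBA hv⟩
    · intro u hu v hv huv
      have e1 := h1 u v
      have e2 := h1 v u
      have e3 := h2 u
      have e4 := hst u
      have e5 := huv.symm
      simp only [Finset.mem_sdiff] at e4 ⊢
      by_cases hu' : u ∈ B <;> by_cases hv' : v ∈ B
      · have := e3 hu' v hv' huv
        tauto
      · tauto
      · tauto
      · exact absurd huv (e4 ⟨hu, hu'⟩ v ⟨hv, hv'⟩)
    · intro u hu
      -- A path never enters `A \ B`, so a path that starts in `B` is a path of `o`.
      have key : ∀ u v, Relation.TransGen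
          (fun u v => o u v ∨ (u ∈ A \ B ∧ v ∈ B ∧ G.Adj u v)) u v →
          v ∈ B ∧ (u ∈ B → Relation.TransGen o u v) := by
        intro u v h
        induction h with
        | single h =>
          rcases h with h | ⟨hu, hv, h⟩
          · exact ⟨(h1 _ _ h).2.2, fun _ => .single h⟩
          · exact ⟨hv, fun hu' => absurd hu' (Finset.mem_sdiff.1 hu).2⟩
        | tail _ h ih =>
          rcases h with h | ⟨hu, hv, h⟩
          · exact ⟨(h1 _ _ h).2.2, fun hu => (ih.2 hu).tail h⟩
          · exact absurd ih.1 (Finset.mem_sdiff.1 hu).2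
      exact h3 u ((key u u hu).2 (key u u hu).1)
    · intro w hw
      simp only [sourcesIn, Finset.mem_filter]
      refine ⟨(Finset.mem_sdiff.1 hw).1, ?_⟩
      rintro u (h | ⟨-, h, -⟩)
      · exact (Finset.mem_sdiff.1 hw).2 (h1 _ _ h).2.2
      · exact (Finset.mem_sdiff.1 hw).2 h
  · intro o ho
    simp only [Finset.coe_filter, Set.mem_ofPred_eq, mem_orientationsOn] at ho
    obtain ⟨⟨h1, h2, h3⟩, hs⟩ := ho
    have hs' : ∀ w ∈ A, w ∉ B → ∀ u, ¬ o u w := fun w hw hwB => by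
      have := hs (Finset.mem_sdiff.2 ⟨hw, hwB⟩)
      simp only [sourcesIn, Finset.mem_filter] at this
      exact this.2
    funext u v
    apply propext
    have e1 := h1 u v
    have e2 := hs' v
    have e4 := hs' u
    constructor
    · rintro (h | ⟨hu, hv, h⟩)
      · exact h.1
      · obtain ⟨hu, hu'⟩ := Finset.mem_sdiff.1 hu
        exact (h2 u hu v (hBA hv) h).2 (e4 hu hu' v)
    · intro h
      obtain ⟨a, b, c⟩ := e1 h
      by_cases hu : u ∈ B
      · exact Or.inl ⟨h, hu⟩
      · refine Or.inr ⟨Finset.mem_sdiff.2 ⟨b, hu⟩, ?_, a⟩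
        by_contra hv
        exact e2 c hv u h
  · intro o ho
    simp only [Finset.mem_coe, mem_orientationsOn] at ho
    funext u v
    apply propext
    have e1 := ho.1 u v
    simp only [Finset.mem_sdiff]
    tauto

open Classical in
lemma sum_orientations_sdiff (G : SimpleGraph V) {A : Finset V} (hA : A.Nonempty) :
    ∑ B ∈ A.powerset with StableIn G (A \ B),
      (-1 : ℤ) ^ (A \ B).card * (orientationsOn G B).card = 0 := by
  have h1 : ∀ B ∈ A.powerset, (if StableIn G (A \ B) then
      (-1 : ℤ) ^ (A \ B).card * (orientationsOn G B).card else 0) =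
      ∑ o ∈ orientationsOn G A, if A \ B ⊆ sourcesIn A o then (-1 : ℤ) ^ (A \ B).card else 0 := by
    intro B hB
    rw [← Finset.sum_filter, Finset.sum_const, nsmul_eq_mul]
    split_ifs with h
    · rw [card_orientations_sources G (Finset.mem_powerset.1 hB) h, mul_comm]
    · rw [Finset.filter_false_of_mem, Finset.card_empty, Nat.cast_zero, zero_mul]
      intro o ho hs
      exact h (stableIn_of_subset_sourcesIn (mem_orientationsOn.1 ho) hs)
  rw [Finset.sum_filter, Finset.sum_congr rfl h1, Finset.sum_comm]
  refine Finset.sum_eq_zero fun o ho => ?_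
  have h2 : ∑ B ∈ A.powerset, (if A \ B ⊆ sourcesIn A o then (-1 : ℤ) ^ (A \ B).card else 0) =
      ∑ T ∈ A.powerset, (if T ⊆ sourcesIn A o then (-1 : ℤ) ^ T.card else 0) := by
    refine Finset.sum_nbij' (fun B => A \ B) (fun B => A \ B) ?_ ?_ ?_ ?_ ?_
    · intro B _; simp
    · intro B _; simp
    · intro B hB; exact Finset.sdiff_sdiff_eq_self (Finset.mem_powerset.1 hB)
    · intro B hB; exact Finset.sdiff_sdiff_eq_self (Finset.mem_powerset.1 hB)
    · intro B _; rfl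
  have h3 : A.powerset.filter (fun T => T ⊆ sourcesIn A o) = (sourcesIn A o).powerset := by
    ext T
    simp only [Finset.mem_filter, Finset.mem_powerset, and_iff_right_iff_imp]
    exact fun h => h.trans (Finset.filter_subset _ _)
  rw [h2, ← Finset.sum_filter, h3]
  exact Finset.sum_powerset_neg_one_pow_card_of_nonempty
    (sourcesIn_nonempty hA (mem_orientationsOn.1 ho))

lemma orientationsOn_eq_singleton {G : SimpleGraph V} {A : Finset V} (h : StableIn G A) :
    orientationsOn G A = {fun _ _ => False} := by
  ext o
  rw [mem_orientationsOn, Finset.mem_singleton]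
  constructor
  · intro ho
    funext u v
    simp only [eq_iff_iff, iff_false]
    exact fun huv => h u (ho.1 u v huv).2.1 v (ho.1 u v huv).2.2 (ho.1 u v huv).1
  · rintro rfl
    refine ⟨by simp, fun u hu v hv huv => absurd huv (h u hu v hv), fun u hu => ?_⟩
    obtain ⟨_, h, _⟩ := Relation.TransGen.head'_iff.1 hu
    exact h

/-! ### Stable chains -/

/-- Removing the last step of a chain. -/
def stableChainSuccEquiv (G : SimpleGraph V) (k : ℕ) (A : Finset V) :
    stableChain G (k + 1) A ≃
      Σ B : {B : Finset V // B ⊂ A ∧ StableIn G (A \ B)}, stableChain G k B.1 where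
  toFun S := ⟨⟨S.1 k, by
      obtain ⟨S, h0, h1, h2, h3⟩ := S
      have hA := h1 (k + 1) le_rfl
      exact ⟨hA ▸ h2 k (Nat.lt_succ_self k), hA ▸ h3 k (Nat.lt_succ_self k)⟩⟩,
    ⟨fun i => S.1 (min i k), by
      obtain ⟨S, h0, h1, h2, h3⟩ := S
      refine ⟨by simpa using h0, fun i hi => by simp [hi], fun i hi => ?_, fun i hi => ?_⟩
      · have e1 : min i k = i := by omega
        have e2 : min (i + 1) k = i + 1 := by omega
        simp only [e1, e2]
        exact h2 i (by omega)
      · have e1 : min i k = i := by omega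
        have e2 : min (i + 1) k = i + 1 := by omega
        simp only [e1, e2]
        exact h3 i (by omega)⟩⟩
  invFun p := ⟨fun i => if i ≤ k then p.2.1 i else A, by
      obtain ⟨⟨B, hBA, hB⟩, S, h0, h1, h2, h3⟩ := p
      have hk : S k = B := h1 k le_rfl
      refine ⟨by simpa using h0, fun i hi => if_neg (by omega), fun i hi => ?_, fun i hi => ?_⟩
      · rcases Nat.lt_succ_iff_lt_or_eq.1 hi with h | rfl
        · simpa [h.le, Nat.succ_le_of_lt h] using h2 i h
        · simpa [hk] using hBA
      · rcases Nat.lt_succ_iff_lt_or_eq.1 hi with h | rfl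
        · simpa [h.le, Nat.succ_le_of_lt h] using h3 i h
        · simpa [hk] using hB⟩
  left_inv := by
    rintro ⟨S, h0, h1, h2, h3⟩
    apply Subtype.ext
    funext i
    by_cases hi : i ≤ k
    · simp [hi]
    · simp only [hi, if_false]
      exact (h1 i (by omega)).symm
  right_inv := by
    rintro ⟨⟨B, hBA, hB⟩, S, h0, h1, h2, h3⟩
    obtain rfl : S k = B := h1 k le_rfl
    have key : (fun i => if min i k ≤ k then S (min i k) else A) = S := by
      funext i
      rw [if_pos (min_le_right _ _)]
      rcases le_total i k with h | h
      · rw [min_eq_left h]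
      · rw [min_eq_right h, h1 i h]
    refine Sigma.ext (Subtype.ext (by simp)) ?_
    refine (Subtype.heq_iff_coe_eq ?_).2 key
    intro x
    simp

lemma stableChain_zero_empty (G : SimpleGraph V) :
    stableChain G 0 ∅ = {fun _ => ∅} := by
  ext S
  simp only [stableChain, Set.mem_ofPred_eq, Set.mem_singleton_iff]
  constructor
  · rintro ⟨_, h, _⟩
    funext i
    exact h i (Nat.zero_le i)
  · rintro rfl
    simp

lemma stableChain_zero_of_nonempty (G : SimpleGraph V) {A : Finset V} (hA : A.Nonempty) :
    stableChain G 0 A = ∅ := by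
  ext S
  simp only [stableChain, Set.mem_ofPred_eq, Set.mem_empty_iff_false, iff_false]
  rintro ⟨h0, h, _⟩
  exact hA.ne_empty ((h 0 le_rfl).symm.trans h0)

instance finite_stableChain (G : SimpleGraph V) (k : ℕ) (A : Finset V) :
    Finite (stableChain G k A) := by
  induction k generalizing A with
  | zero =>
    rcases A.eq_empty_or_nonempty with rfl | hA
    · rw [stableChain_zero_empty]; infer_instance
    · rw [stableChain_zero_of_nonempty G hA]; infer_instance
  | succ k ih => exact Finite.of_equiv _ (stableChainSuccEquiv G k A).symm

open Classical in
lemma card_stableChain_succ (G : SimpleGraph V) (k : ℕ) (A : Finset V) :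
    Nat.card (stableChain G (k + 1) A) =
      ∑ B ∈ A.powerset with B ⊂ A ∧ StableIn G (A \ B), Nat.card (stableChain G k B) := by
  rw [Nat.card_congr (stableChainSuccEquiv G k A), Nat.card_sigma]
  refine (Finset.sum_subtype _ (fun B => ?_) (fun B => Nat.card (stableChain G k B))).symm
  simp only [Finset.mem_filter, Finset.mem_powerset, and_iff_right_iff_imp]
  exact fun h => h.1.1

lemma neg_one_pow_sdiff {A B : Finset V} (h : B ⊆ A) :
    (-1 : ℤ) ^ B.card = (-1) ^ A.card * (-1) ^ (A \ B).card := by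
  rw [← Finset.card_sdiff_add_card_eq_card h, pow_add, mul_right_comm, ← mul_pow]
  simp

/-- Stanley's theorem: the alternating count of stable chains is, up to sign, the number of
acyclic orientations.  The length bound `n` is arbitrary as long as it is at least `|A|`, since
longer chains do not exist. -/
lemma sum_stableChain (G : SimpleGraph V) (n : ℕ) (A : Finset V) (hn : A.card ≤ n) :
    ∑ k ∈ Finset.range (n + 1), (-1 : ℤ) ^ k * Nat.card (stableChain G k A) =
      (-1) ^ A.card * (orientationsOn G A).card := by
  classical
  have hempty : ∀ n, ∑ k ∈ Finset.range (n + 1), (-1 : ℤ) ^ k * Nat.card (stableChain G k ∅) =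
      (-1) ^ (∅ : Finset V).card * (orientationsOn G ∅).card := by
    intro n
    rw [Finset.sum_range_succ', Finset.sum_eq_zero,
      orientationsOn_eq_singleton (fun u hu => absurd hu (Finset.notMem_empty u)),
      stableChain_zero_empty]
    · simp
    · intro k _
      rw [card_stableChain_succ, Finset.sum_eq_zero]
      · simp
      · intro B hB
        exact absurd (Finset.mem_filter.1 hB).2.1 (Finset.not_ssubset_empty B)
  induction n generalizing A with
  | zero =>
    obtain rfl := Finset.card_eq_zero.1 (Nat.le_zero.1 hn)
    exact hempty 0
  | succ n ih =>
    rcases A.eq_empty_or_nonempty with rfl | hA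
    · exact hempty (n + 1)
    have step : ∀ B, B ⊂ A →
        ∑ k ∈ Finset.range (n + 1), (-1 : ℤ) ^ k * Nat.card (stableChain G k B) =
          (-1) ^ B.card * (orientationsOn G B).card := fun B hB =>
      ih B (by have := Finset.card_lt_card hB; omega)
    have hz := sum_orientations_sdiff G hA
    have hsplit : A.powerset.filter (fun B => StableIn G (A \ B)) =
        insert A (A.powerset.filter (fun B => B ⊂ A ∧ StableIn G (A \ B))) := by
      ext B
      simp only [Finset.mem_filter, Finset.mem_powerset, Finset.mem_insert]
      constructor
      · rintro ⟨h1, h2⟩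
        rcases h1.eq_or_ssubset with h | h
        · exact Or.inl h
        · exact Or.inr ⟨h1, h, h2⟩
      · rintro (rfl | h)
        · exact ⟨subset_rfl, by simp [StableIn]⟩
        · exact ⟨h.1, h.2.2⟩
    rw [hsplit, Finset.sum_insert (by simp)] at hz
    simp only [Finset.sdiff_self, Finset.card_empty, pow_zero, one_mul] at hz
    rw [Finset.sum_range_succ', stableChain_zero_of_nonempty G hA]
    simp only [card_stableChain_succ, Nat.cast_sum, Finset.mul_sum]
    rw [Finset.sum_comm]
    have : ∀ B ∈ A.powerset.filter (fun B => B ⊂ A ∧ StableIn G (A \ B)),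
        ∑ k ∈ Finset.range (n + 1), (-1 : ℤ) ^ (k + 1) * Nat.card (stableChain G k B) =
          -(-1) ^ A.card * ((-1) ^ (A \ B).card * (orientationsOn G B).card) := by
      intro B hB
      have hB := (Finset.mem_filter.1 hB).2.1
      have := step B hB
      rw [neg_one_pow_sdiff hB.1] at this
      simp only [pow_succ, mul_neg_one, neg_mul, Finset.sum_neg_distrib, this]
      ring
    rw [Finset.sum_congr rfl this, ← Finset.mul_sum, eq_neg_of_add_eq_zero_right hz]
    simp

end ColoringComplex

/-! ### The Euler characteristic -/

/-- Assume `G` has at least one edge.  For `k ≥ 1` let `N k` be the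
number of face-chains `∅ ⊊ S 1 ⊊ ⋯ ⊊ S k ⊊ [d]` of `G` of length `k` (encoded by
`S : ℕ → Finset (Fin d)` with `S 0 = ∅` and `S i = univ` for `i ≥ k + 1`; face-chain
means some difference set `S (i+1) ∖ S i`, `0 ≤ i ≤ k`, contains two adjacent
vertices).  Then `N k = 0` for `k > d` and
`Σ_{k ≥ 1} (−1)^{k−1} N k = 1 + (−1)^{d−1} · (a(G) − 1)`,
i.e. the reduced Euler characteristic of the coloring complex `Δ_G` is
`(−1)^{d−1})·(a(G) − 1)`.  In particular, when `d` is odd the Euler characteristic of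
`Δ_G` equals the number of acyclic orientations of `G`. -/
theorem euler_characteristic_coloring_complex {d : ℕ} (hd : 1 ≤ d)
    (G : SimpleGraph (Fin d)) (he : ∃ u v, G.Adj u v) (N : ℕ → ℕ)
    (hN : ∀ k, N k = Nat.card {S : ℕ → Finset (Fin d) // S 0 = ∅ ∧
      (∀ i, k + 1 ≤ i → S i = Finset.univ) ∧ (∀ i, i ≤ k → S i ⊂ S (i + 1)) ∧
      ∃ i ≤ k, ∃ u v, G.Adj u v ∧ u ∈ S (i + 1) \ S i ∧ v ∈ S (i + 1) \ S i}) :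
    (∀ k, d < k → N k = 0) ∧
    (∑ k ∈ Finset.Icc 1 d, (-1 : ℤ) ^ (k - 1) * N k =
      1 + (-1 : ℤ) ^ (d - 1) * ((acyclicOrientations G : ℤ) - 1)) ∧
    (Odd d → ∑ k ∈ Finset.Icc 1 d, (-1 : ℤ) ^ (k - 1) * N k =
      (acyclicOrientations G : ℤ)) := by
  classical
  have hu : (Finset.univ : Finset (Fin d)).Nonempty := ⟨⟨0, hd⟩, Finset.mem_univ _⟩
  -- The stable chains of `⊥` are all chains; `N k` counts those that are not stable for `G`.
  have hdiff : ∀ k, (N k : ℤ) = Nat.card (stableChain (⊥ : SimpleGraph (Fin d)) (k + 1) .univ) -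
      Nat.card (stableChain G (k + 1) .univ) := by
    intro k
    have hsub : stableChain G (k + 1) .univ ⊆
        stableChain (⊥ : SimpleGraph (Fin d)) (k + 1) .univ :=
      fun S hS => ⟨hS.1, hS.2.1, hS.2.2.1, fun i _ u _ v _ h => h⟩
    have hset : N k = Set.ncard (stableChain (⊥ : SimpleGraph (Fin d)) (k + 1) .univ \
        stableChain G (k + 1) .univ) := by
      rw [hN k, ← Nat.card_coe_set_eq]
      refine Nat.card_congr (Equiv.subtypeEquivRight fun S => ?_)
      simp only [Set.mem_sdiff, stableChain, Set.mem_ofPred_eq, Nat.lt_succ_iff, StableIn]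
      constructor
      · rintro ⟨h0, h1, h2, i, hi, u, v, huv, hu, hv⟩
        exact ⟨⟨h0, h1, h2, fun i _ u _ v _ h => h⟩,
          fun h => h.2.2.2 i hi u hu v hv huv⟩
      · rintro ⟨⟨h0, h1, h2, -⟩, h⟩
        refine ⟨h0, h1, h2, ?_⟩
        by_contra hcon
        push Not at hcon
        exact h ⟨h0, h1, h2, fun i hi u hu v hv huv => hcon i hi u v huv hu hv⟩
    have := Set.ncard_sdiff_add_ncard_of_subset hsub (Set.toFinite _)
    rw [← hset] at this
    rw [Nat.card_coe_set_eq, Nat.card_coe_set_eq, ← this]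
    push_cast
    ring
  have haG : acyclicOrientations G = (orientationsOn G .univ).card := by
    rw [acyclicOrientations, Nat.card_eq_fintype_card, Fintype.card_subtype, orientationsOn]
    congr 1
    refine Finset.filter_congr fun o _ => ?_
    simp [IsAcyclicOrientationOn]
  have hbot : (orientationsOn (⊥ : SimpleGraph (Fin d)) .univ).card = 1 := by
    rw [orientationsOn_eq_singleton (fun u _ v _ h => h), Finset.card_singleton]
  have hsum : ∑ k ∈ Finset.range (d + 1), (-1 : ℤ) ^ k * N k =
      (-1) ^ d * ((acyclicOrientations G : ℤ) - 1) := by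
    have h1 := sum_stableChain G (d + 1) .univ (by simp)
    have h2 := sum_stableChain (⊥ : SimpleGraph (Fin d)) (d + 1) .univ (by simp)
    rw [Finset.sum_range_succ', stableChain_zero_of_nonempty _ hu] at h1 h2
    simp only [pow_succ, mul_neg_one, neg_mul, Finset.sum_neg_distrib, Finset.card_univ,
      Fintype.card_fin, hbot, ← haG, Nat.card_eq_fintype_card, Fintype.card_eq_zero] at h1 h2
    simp only [hdiff, mul_sub, Finset.sum_sub_distrib]
    simp at h1 h2 ⊢
    linarith
  -- For `k = 0` the only chain is `∅ ⊂ univ`, and it contains an edge of `G`.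
  have hN0 : N 0 = 1 := by
    rw [hN 0, Nat.card_eq_one_iff_exists]
    obtain ⟨u, v, huv⟩ := he
    refine ⟨⟨fun i => if i = 0 then ∅ else .univ, by simp, fun i hi => if_neg (by omega), ?_,
      0, le_rfl, u, v, huv, by simp, by simp⟩, ?_⟩
    · intro i hi
      obtain rfl := Nat.le_zero.1 hi
      simpa [Finset.ssubset_univ_iff] using hu.ne_empty.symm
    · rintro ⟨S, h0, h1, -⟩
      apply Subtype.ext
      funext i
      by_cases hi : i = 0
      · simp [hi, h0]
      · simpa [hi] using h1 i (by omega)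
  have hmain : ∑ k ∈ Finset.Icc 1 d, (-1 : ℤ) ^ (k - 1) * N k =
      1 + (-1 : ℤ) ^ (d - 1) * ((acyclicOrientations G : ℤ) - 1) := by
    obtain ⟨m, rfl⟩ : ∃ m, d = m + 1 := ⟨d - 1, by omega⟩
    rw [Finset.sum_range_succ', hN0] at hsum
    have e : ∑ k ∈ Finset.Icc 1 (m + 1), (-1 : ℤ) ^ (k - 1) * N k =
        ∑ k ∈ Finset.range (m + 1), (-1 : ℤ) ^ k * N (k + 1) := by
      refine Finset.sum_nbij' (fun k => k - 1) (fun k => k + 1) ?_ ?_ ?_ ?_ ?_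
      · intro k hk; simp at hk ⊢; omega
      · intro k hk; simp at hk ⊢; omega
      · intro k hk; simp at hk ⊢; omega
      · intro k hk; simp
      · intro k hk
        rw [Nat.sub_add_cancel (Finset.mem_Icc.1 hk).1]
    rw [e]
    simp only [pow_succ, mul_neg_one, neg_mul, Finset.sum_neg_distrib] at hsum
    simp only [Nat.add_sub_cancel]
    push_cast at hsum
    linarith
  refine ⟨?_, hmain, ?_⟩
  · intro k hk
    rw [hN k, Nat.card_eq_zero]
    left
    refine ⟨?_⟩
    rintro ⟨S, -, -, h2, -⟩
    have hc : ∀ i, i ≤ k + 1 → i ≤ (S i).card := by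
      intro i
      induction i with
      | zero => simp
      | succ i ih =>
        intro hi
        have := Finset.card_lt_card (h2 i (by omega))
        have := ih (by omega)
        omega
    have h := hc (k + 1) le_rfl
    have h' := Finset.card_le_univ (S (k + 1))
    rw [Fintype.card_fin] at h'
    omega
  · rintro ⟨m, rfl⟩
    rw [hmain]
    simp
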